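/- Let G = (V,E) be a finite connected graph with symmetric irreflexive edge relation, let T ⊆ V be nonempty, and let φ and φ* be flows on G satisfying flow conservation for the injections q : V → ℝ and q* : V → ℝ respectively. If q_i ≥ q*_i for all i ∈ V \ T, then for every node u ∈ V \ T there exists a directed path {i_1, …, i_n} of pairwise distinct vertices with i_1 ∈ T, i_n = u, and φ*_{i_l i_{l+1}} ≥ φ_{i_l i_{l+1}} for every 1 ≤ l ≤ n−1. -/

import Mathlib

open Finset

/-!
The difference `f = φ* - φ` is again a flow, and its net inflow at `i` is `q i - q* i`, which is
nonnegative outside `T`. Let `U` be the set of vertices from which `u` can be reached along edges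
with `f ≥ 0`, and suppose that `U` misses `T`. Summing the net inflow over `U`, the flow along the
edges inside `U` cancels by skew-symmetry, so the total flow entering `U` is nonnegative. Some edge
does enter `U`, hence some entering edge carries nonnegative flow; but then its source lies in `U`.
-/

section Reachability

variable {α : Type*} {r : α → α → Prop} {a b : α}

theorem exists_relSeries_injective_of_reflTransGen (h : Relation.ReflTransGen r a b) :
    ∃ p : RelSeries {(x, y) | r x y}, Function.Injective p ∧ p.head = a ∧ p.last = b := by
  induction h using Relation.ReflTransGen.head_induction_on with
  | refl => exact ⟨.singleton _ b, Function.injective_of_subsingleton (α := Fin 1) _, rfl, rfl⟩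
  | @head a c hac _ ih =>
    obtain ⟨p, hinj, rfl, hlast⟩ := ih
    by_cases ha : a ∈ p
    · obtain ⟨k, hk⟩ := ha
      refine ⟨p.drop k, fun x y hxy => ?_, (p.head_drop k).trans hk, (p.last_drop k).trans hlast⟩
      exact Fin.ext (Nat.add_right_cancel (congrArg Fin.val (hinj hxy)))
    · have hnodup : (p.cons a hac).toList.Nodup := by
        rw [p.toList_cons, List.nodup_cons, RelSeries.mem_toList]
        exact ⟨ha, List.nodup_ofFn.mpr hinj⟩
      exact ⟨p.cons a hac, List.nodup_ofFn.mp hnodup, p.head_cons a hac,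
        (p.last_cons a hac).trans hlast⟩

theorem exists_rel_notMem_mem_of_reflTransGen {s : Set α} (h : Relation.ReflTransGen r a b)
    (ha : a ∉ s) (hb : b ∈ s) : ∃ x y, r x y ∧ x ∉ s ∧ y ∈ s := by
  induction h with
  | refl => exact absurd hb ha
  | @tail c d _ hcd ih =>
    by_cases hc : c ∈ s
    · exact ih hc
    · exact ⟨c, d, hcd, hc, hb⟩

end Reachability

section Flow

variable {V M : Type*} {E : V → V → Prop} {f g : V → V → M}

/-- `f` is a flow on the graph with edge relation `E`: it is skew-symmetric along the edges. Its
values off the edges are unconstrained. -/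
def IsFlow [Neg M] (E : V → V → Prop) (f : V → V → M) : Prop :=
  ∀ i j, E i j → f i j = -f j i

/-- The total flow into the vertex `i` from its neighbours, so that flow conservation for the
injections `q` reads `netInflow E f i + q i = 0`. -/
def netInflow [Fintype V] [AddCommMonoid M] (E : V → V → Prop) [DecidableRel E] (f : V → V → M)
    (i : V) : M :=
  ∑ j with E j i, f j i

theorem IsFlow.sub [AddCommGroup M] (hf : IsFlow E f) (hg : IsFlow E g) : IsFlow E (f - g) := by
  intro i j hij
  simp only [Pi.sub_apply, hf i j hij, hg i j hij, neg_sub, neg_sub_neg]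

theorem netInflow_sub [Fintype V] [AddCommGroup M] [DecidableRel E] (i : V) :
    netInflow E (f - g) i = netInflow E f i - netInflow E g i :=
  sum_sub_distrib _ _

theorem IsFlow.sum_internal_eq_zero [DecidableRel E] [Std.Symm E] [AddCommGroup M]
    [IsAddTorsionFree M] (hf : IsFlow E f) (U : Finset V) :
    ∑ e ∈ U ×ˢ U with E e.1 e.2, f e.1 e.2 = 0 := by
  rw [← self_eq_neg, ← sum_neg_distrib]
  refine sum_equiv (Equiv.prodComm V V) (fun e => ?_) fun e he => hf _ _ (mem_filter.mp he).2
  simp [Std.Symm.iff (r := E) e.1 e.2, and_comm]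

theorem IsFlow.sum_netInflow_eq_sum_entering [Fintype V] [DecidableEq V] [DecidableRel E]
    [Std.Symm E] [AddCommGroup M] [IsAddTorsionFree M] (hf : IsFlow E f) (U : Finset V) :
    ∑ i ∈ U, netInflow E f i = ∑ e ∈ Uᶜ ×ˢ U with E e.1 e.2, f e.1 e.2 := by
  have hinternal := hf.sum_internal_eq_zero U
  simp only [sum_filter, sum_product_right] at hinternal ⊢
  simp only [netInflow, sum_filter, ← sum_add_sum_compl U, sum_add_distrib, hinternal, zero_add]

variable [Fintype V] [DecidableRel E] [Std.Symm E]
  [AddCommGroup M] [LinearOrder M] [IsOrderedAddMonoid M]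

theorem IsFlow.exists_entering_nonneg (hf : IsFlow E f) {U : Finset V}
    (hU : 0 ≤ ∑ i ∈ U, netInflow E f i) (hE : ∃ j i, E j i ∧ j ∉ U ∧ i ∈ U) :
    ∃ j i, (E j i ∧ 0 ≤ f j i) ∧ j ∉ U ∧ i ∈ U := by
  classical
  obtain ⟨j, i, hji, hj, hi⟩ := hE
  have hne : {e ∈ Uᶜ ×ˢ U | E e.1 e.2}.Nonempty := ⟨(j, i), by simp [hji, hj, hi]⟩
  rw [hf.sum_netInflow_eq_sum_entering, ← sum_const_zero] at hU
  obtain ⟨e, he, hfe⟩ := exists_le_of_sum_le hne hU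
  simp only [mem_filter, mem_product, mem_compl] at he
  exact ⟨e.1, e.2, ⟨he.2, hfe⟩, he.1⟩

theorem IsFlow.exists_mem_reflTransGen_nonneg (hf : IsFlow E f) {T : Set V} {u : V}
    (hT : ∃ t ∈ T, Relation.ReflTransGen E t u) (hinflow : ∀ i ∉ T, 0 ≤ netInflow E f i) :
    ∃ t ∈ T, Relation.ReflTransGen (fun i j => E i j ∧ 0 ≤ f i j) t u := by
  classical
  by_contra! hdisj
  let U : Finset V := {w | Relation.ReflTransGen (fun i j => E i j ∧ 0 ≤ f i j) w u}
  have hmem (w : V) : w ∈ U ↔ Relation.ReflTransGen (fun i j => E i j ∧ 0 ≤ f i j) w u := by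
    simp [U]
  have hinflowU : 0 ≤ ∑ i ∈ U, netInflow E f i :=
    sum_nonneg fun i hi => hinflow i fun hiT => hdisj i hiT ((hmem i).mp hi)
  have henter : ∃ j i, E j i ∧ j ∉ U ∧ i ∈ U := by
    obtain ⟨t, htT, htu⟩ := hT
    exact exists_rel_notMem_mem_of_reflTransGen (s := U) htu
      (fun ht => hdisj t htT ((hmem t).mp ht)) ((hmem u).mpr .refl)
  obtain ⟨j, i, hji, hj, hi⟩ := hf.exists_entering_nonneg hinflowU henter
  exact hj ((hmem j).mpr (((hmem i).mp hi).head hji))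

theorem aquarius_theorem_weak_general {φ φs : V → V → M} (hφ : IsFlow E φ) (hφs : IsFlow E φs)
    {q qs : V → M} (hcons : ∀ i, netInflow E φ i + q i = 0)
    (hconss : ∀ i, netInflow E φs i + qs i = 0) {T : Set V} (hq : ∀ i ∉ T, qs i ≤ q i) {u : V}
    (hT : ∃ t ∈ T, Relation.ReflTransGen E t u) :
    ∃ (n : ℕ) (p : Fin (n + 1) → V), Function.Injective p ∧ p 0 ∈ T ∧ p (Fin.last n) = u ∧
      (∀ l : Fin n, E (p l.castSucc) (p l.succ)) ∧
      ∀ l : Fin n, φ (p l.castSucc) (p l.succ) ≤ φs (p l.castSucc) (p l.succ) := by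
  have hinflow (i : V) (hi : i ∉ T) : 0 ≤ netInflow E (φs - φ) i := by
    rw [netInflow_sub, eq_neg_of_add_eq_zero_left (hcons i),
      eq_neg_of_add_eq_zero_left (hconss i), neg_sub_neg]
    exact sub_nonneg.mpr (hq i hi)
  obtain ⟨t, ht, htu⟩ := (hφs.sub hφ).exists_mem_reflTransGen_nonneg hT hinflow
  obtain ⟨p, hinj, rfl, hlast⟩ := exists_relSeries_injective_of_reflTransGen htu
  exact ⟨p.length, p, hinj, ht, hlast, fun l => (p.step l).1, fun l => sub_nonneg.mp (p.step l).2⟩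

end Flow

/-- **Aquarius Theorem** (weak inequalities): in a finite connected graph with a
symmetric irreflexive edge relation, if two conserved flows `φ`, `φs` have
injections `q ≥ qs` outside a nonempty set `T`, then from every `u ∉ T` there is
a directed path of pairwise distinct vertices from some node of `T` to `u`
along which `φs ≥ φ` edgewise. -/
theorem aquarius_theorem_weak
    {V : Type*} [Fintype V] [DecidableEq V] [Nonempty V]
    (E : V → V → Prop) [DecidableRel E]
    (hsymm : ∀ i j, E i j → E j i)
    (hirrefl : ∀ i, ¬ E i i)
    (hconn : ∀ u v : V, Relation.ReflTransGen E u v)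
    (T : Finset V) (hT : T.Nonempty)
    (φ φs : V → V → ℝ)
    (hskew : ∀ i j, E i j → φ i j = - φ j i)
    (hskews : ∀ i j, E i j → φs i j = - φs j i)
    (q qs : V → ℝ)
    (hcons : ∀ i : V, (∑ j ∈ univ.filter (fun j => E j i), φ j i) + q i = 0)
    (hconss : ∀ i : V, (∑ j ∈ univ.filter (fun j => E j i), φs j i) + qs i = 0)
    (hq : ∀ i : V, i ∉ T → q i ≥ qs i) :
    ∀ u : V, u ∉ T →
      ∃ (n : ℕ) (p : Fin (n + 1) → V),
        Function.Injective p ∧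
        p 0 ∈ T ∧
        p (Fin.last n) = u ∧
        (∀ l : Fin n, E (p l.castSucc) (p l.succ)) ∧
        (∀ l : Fin n, φs (p l.castSucc) (p l.succ) ≥ φ (p l.castSucc) (p l.succ)) := by
  intro u _
  have : Std.Symm E := ⟨hsymm⟩
  exact aquarius_theorem_weak_general (T := T) hskew hskews hcons hconss hq
    (hT.imp fun t ht => ⟨ht, hconn t u⟩)
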